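/- Let 𝒜 be an abelian category with enough injectives satisfying AB4*-n for some nonnegative integer n. Then the category of unbounded complexes over 𝒜 has enough K-injective objects: every complex admits a quasi-isomorphism to a K-injective complex. -/

import Mathlib

/-!
STATEMENT 7 (Theorem 1.3, second part): Let `𝒜` be an abelian category with enough injectives
satisfying AB4*-n for some nonnegative integer `n`.  Then the category of unbounded
`𝒜`-complexes has enough K-injective objects: every complex admits a quasi-isomorphism to a
K-injective complex (in the sense of Spaltenstein).
-/

open CategoryTheory Limits

universe v u

/-- AB4*-`n`: the derived functors of product, computed via injective resolutions, vanish in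
degrees `> n`. -/
def AB4StarMinus (C : Type u) [Category.{v} C] [Abelian C] [HasProducts.{0} C] (n : ℕ) : Prop :=
  ∀ (I : Type) (A : I → C) (R : ∀ i, InjectiveResolution (A i)) (q : ℕ), n < q →
    IsZero ((HomologicalComplex.homologyFunctor C (ComplexShape.up ℕ) q).obj
      (∏ᶜ fun i => (R i).cocomplex))

/-- A complex `I` is K-injective if every morphism from an acyclic complex to `I` is
null-homotopic (equivalently, `Hom•(A, I)` is acyclic for every acyclic `A`). -/
def KInjective {C : Type u} [Category.{v} C] [Abelian C] (I : CochainComplex C ℤ) : Prop :=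
  ∀ (A : CochainComplex C ℤ), (∀ n, A.ExactAt n) → ∀ f : A ⟶ I, Nonempty (Homotopy f 0)

namespace KInjTower

set_option linter.unusedSectionVars false

open HomologicalComplex

section products

variable {C : Type u} [Category.{v} C] [Abelian C] [HasProducts.{0} C]
  {ι : Type*} {c : ComplexShape ι}

/-- The product of complexes is computed degreewise. -/
noncomputable def piXIsLimit (L : ℕ → HomologicalComplex C c) (j : ι) :
    IsLimit (Fan.mk ((∏ᶜ L).X j) (fun m => (Pi.π L m).f j)) :=
  isLimitFanMkObjOfIsLimit (eval C c j) L (Pi.π L) (productIsProduct L)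

noncomputable def piXLift (L : ℕ → HomologicalComplex C c) (j : ι) {T : C}
    (t : ∀ m, T ⟶ (L m).X j) : T ⟶ (∏ᶜ L).X j :=
  (piXIsLimit L j).lift (Fan.mk T t)

@[simp]
lemma piXLift_π (L : ℕ → HomologicalComplex C c) (j : ι) {T : C}
    (t : ∀ m, T ⟶ (L m).X j) (m : ℕ) : piXLift L j t ≫ (Pi.π L m).f j = t m :=
  (piXIsLimit L j).fac (Fan.mk T t) ⟨m⟩

lemma piXLift_π_assoc (L : ℕ → HomologicalComplex C c) (j : ι) {T Z : C}
    (t : ∀ m, T ⟶ (L m).X j) (m : ℕ) (h : (L m).X j ⟶ Z) :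
    piXLift L j t ≫ (Pi.π L m).f j ≫ h = t m ≫ h := by
  rw [← Category.assoc, piXLift_π]

lemma piX_ext (L : ℕ → HomologicalComplex C c) (j : ι) {T : C}
    {f g : T ⟶ (∏ᶜ L).X j} (h : ∀ m, f ≫ (Pi.π L m).f j = g ≫ (Pi.π L m).f j) : f = g :=
  (piXIsLimit L j).hom_ext (fun ⟨m⟩ => h m)

instance injective_pi (L : ℕ → HomologicalComplex C c) (j : ι)
    [∀ m, Injective ((L m).X j)] : Injective ((∏ᶜ L).X j) where
  factors {X Y} g f _ := by
    refine ⟨piXLift L j (fun m => Injective.factorThru (g ≫ (Pi.π L m).f j) f), ?_⟩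
    apply piX_ext
    intro m
    simp

end products

variable {C : Type u} [Category.{v} C] [Abelian C] [HasProducts.{0} C]

/-- A product of K-injective complexes is K-injective. -/
lemma isKInjective_pi (L : ℕ → CochainComplex C ℤ) [∀ m, (L m).IsKInjective] :
    (∏ᶜ L).IsKInjective where
  nonempty_homotopy_zero {K} f hK := by
    let h (m : ℕ) : Homotopy (f ≫ Pi.π L m) 0 :=
      CochainComplex.IsKInjective.homotopyZero _ hK
    refine ⟨{ hom i j := piXLift L j (fun m => (h m).hom i j), zero i j hij := ?_, comm i := ?_ }⟩
    · apply piX_ext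
      intro m
      simp [(h m).zero i j hij]
    · apply piX_ext
      intro m
      have := (h m).comm i
      rw [dNext_eq _ (show (ComplexShape.up ℤ).Rel i (i+1) by simp),
        prevD_eq _ (show (ComplexShape.up ℤ).Rel (i-1) i by simp)] at this ⊢
      simpa [← Hom.comm, piXLift_π_assoc] using this

/-- `1 - shift`. -/
noncomputable def dT (L : ℕ → CochainComplex C ℤ) (p : ∀ m, L (m + 1) ⟶ L m) : ∏ᶜ L ⟶ ∏ᶜ L :=
  Pi.lift (fun m => Pi.π L m - Pi.π L (m + 1) ≫ p m)

@[simp]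
lemma dT_π (L : ℕ → CochainComplex C ℤ) (p : ∀ m, L (m + 1) ⟶ L m) (m : ℕ) :
    dT L p ≫ Pi.π L m = Pi.π L m - Pi.π L (m + 1) ≫ p m := by simp [dT]

lemma dT_π_assoc (L : ℕ → CochainComplex C ℤ) (p : ∀ m, L (m + 1) ⟶ L m) (m : ℕ)
    {Z : CochainComplex C ℤ} (h : L m ⟶ Z) :
    dT L p ≫ Pi.π L m ≫ h = (Pi.π L m - Pi.π L (m + 1) ≫ p m) ≫ h := by
  rw [← Category.assoc, dT_π]

@[simp]
lemma dT_π_f (L : ℕ → CochainComplex C ℤ) (p : ∀ m, L (m + 1) ⟶ L m) (m : ℕ) (j : ℤ) :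
    (dT L p).f j ≫ (Pi.π L m).f j =
      (Pi.π L m).f j - (Pi.π L (m + 1)).f j ≫ (p m).f j := by
  rw [← comp_f, dT_π]; simp

/-- Components of the section of `1 - shift`. -/
noncomputable def secT (L : ℕ → CochainComplex C ℤ) (j : ℤ)
    (s : ∀ m, (L m).X j ⟶ (L (m + 1)).X j) : ∀ m, (∏ᶜ L).X j ⟶ (L m).X j
  | 0 => 0
  | m + 1 => (secT L j s m - (Pi.π L m).f j) ≫ s m

lemma secT_dT (L : ℕ → CochainComplex C ℤ) (p : ∀ m, L (m + 1) ⟶ L m) (j : ℤ)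
    (s : ∀ m, (L m).X j ⟶ (L (m + 1)).X j) (hs : ∀ m, s m ≫ (p m).f j = 𝟙 _) :
    piXLift L j (secT L j s) ≫ (dT L p).f j = 𝟙 _ := by
  apply piX_ext
  intro m
  simp [secT, hs, piXLift_π_assoc]

open CochainComplex in
lemma exists_section {K L : CochainComplex C ℤ} {p : K ⟶ L}
    (hp : degreewiseEpiWithInjectiveKernel p) (j : ℤ) : ∃ s, s ≫ p.f j = 𝟙 (L.X j) := by
  obtain ⟨I, _, f, w, ⟨σ⟩⟩ := (Abelian.epiWithInjectiveKernel_iff _).1 (hp j)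
  exact ⟨σ.s, σ.s_g⟩

/-- `I` is the limit of the tower `L`. -/
structure IsLim (L : ℕ → CochainComplex C ℤ) (p : ∀ m, L (m + 1) ⟶ L m)
    (I : CochainComplex C ℤ) (π : ∀ m, I ⟶ L m) : Prop where
  w : ∀ m, π (m + 1) ≫ p m = π m
  lift : ∀ {T : CochainComplex C ℤ} (t : ∀ m, T ⟶ L m), (∀ m, t (m + 1) ≫ p m = t m) →
    ∃ u : T ⟶ I, ∀ m, u ≫ π m = t m
  ext : ∀ {T : CochainComplex C ℤ} (u v : T ⟶ I), (∀ m, u ≫ π m = v ≫ π m) → u = v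

lemma isLim_kernel (L : ℕ → CochainComplex C ℤ) (p : ∀ m, L (m + 1) ⟶ L m) :
    IsLim L p (kernel (dT L p)) (fun m => kernel.ι _ ≫ Pi.π L m) where
  w m := by
    have := kernel.condition (dT L p) =≫ Pi.π L m
    simp only [Category.assoc, dT_π, zero_comp, Preadditive.comp_sub] at this
    rw [Category.assoc, eq_comm, ← sub_eq_zero, this]
  lift t ht := by
    have h0 : Pi.lift t ≫ dT L p = 0 := by
      apply Pi.hom_ext
      intro m
      simp [ht]
    exact ⟨kernel.lift _ (Pi.lift t) h0, fun m => by simp⟩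
  ext u v h := by
    rw [← cancel_mono (kernel.ι (dT L p))]
    ext m : 1
    simpa using h m

/-- The sequence `I ⟶ ∏ L ⟶ ∏ L`. -/
noncomputable def scT (L : ℕ → CochainComplex C ℤ) (p : ∀ m, L (m + 1) ⟶ L m)
    (I : CochainComplex C ℤ) (π : ∀ m, I ⟶ L m) (h : IsLim L p I π) :
    ShortComplex (CochainComplex C ℤ) :=
  ShortComplex.mk (Pi.lift π) (dT L p) (by ext m : 1; simp [h.w])

lemma IsLim.mono_lift {L : ℕ → CochainComplex C ℤ} {p : ∀ m, L (m + 1) ⟶ L m}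
    {I : CochainComplex C ℤ} {π : ∀ m, I ⟶ L m} (h : IsLim L p I π) : Mono (Pi.lift π) := by
  refine ⟨fun u v huv => h.ext _ _ fun m => ?_⟩
  simpa using huv =≫ Pi.π L m

lemma IsLim.exists_lift {L : ℕ → CochainComplex C ℤ} {p : ∀ m, L (m + 1) ⟶ L m}
    {I : CochainComplex C ℤ} {π : ∀ m, I ⟶ L m} (h : IsLim L p I π)
    {T : CochainComplex C ℤ} (t : T ⟶ ∏ᶜ L) (ht : t ≫ dT L p = 0) :
    ∃ u, u ≫ Pi.lift π = t := by
  obtain ⟨u, hu⟩ := h.lift (fun m => t ≫ Pi.π L m) (fun m => by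
      have := ht =≫ Pi.π L m
      simp only [Category.assoc, dT_π, zero_comp, Preadditive.comp_sub] at this
      rw [Category.assoc, eq_comm, ← sub_eq_zero, this])
  refine ⟨u, ?_⟩
  apply Pi.hom_ext
  intro m
  simpa using hu m

open CochainComplex in
lemma scT_shortExact (L : ℕ → CochainComplex C ℤ) (p : ∀ m, L (m + 1) ⟶ L m)
    (I : CochainComplex C ℤ) (π : ∀ m, I ⟶ L m) (h : IsLim L p I π)
    (hp : ∀ m, degreewiseEpiWithInjectiveKernel (p m)) :
    (scT L p I π h).ShortExact where
  mono_f := h.mono_lift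
  epi_g := by
    apply epi_of_epi_f
    intro j
    choose s hs using fun m => exists_section (hp m) j
    have := secT_dT L p j s hs
    exact (SplitEpi.mk _ this).epi
  exact := by
    have : Mono (scT L p I π h).f := h.mono_lift
    apply ShortComplex.exact_of_f_is_kernel
    exact KernelFork.IsLimit.ofι' _ _ (fun {T} t ht =>
      ⟨(h.exists_lift t ht).choose, (h.exists_lift t ht).choose_spec⟩)

open CochainComplex in
lemma isKInjective_of_isLim (L : ℕ → CochainComplex C ℤ) (p : ∀ m, L (m + 1) ⟶ L m)
    (I : CochainComplex C ℤ) (π : ∀ m, I ⟶ L m) (h : IsLim L p I π)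
    (hp : ∀ m, degreewiseEpiWithInjectiveKernel (p m))
    [∀ m, (L m).IsKInjective] : I.IsKInjective := by
  have hS := scT_shortExact L p I π h hp
  have := isKInjective_pi L
  have σ (j : ℤ) : ((scT L p I π h).map (eval C _ j)).Splitting := by
    choose s hs using fun m => exists_section (hp m) j
    have hj := hS.map_of_exact (eval C _ j)
    exact .ofExactOfSection _ hj.exact _ (secT_dT L p j s hs) hj.mono_f
  have hT : trianglehOfDegreewiseSplit (scT L p I π h) σ ∈ distTriang _ :=
    (HomotopyCategory.distinguished_iff_iso_trianglehOfDegreewiseSplit _).2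
      ⟨_, σ, ⟨Iso.refl _⟩⟩
  rw [isKInjective_iff_rightOrthogonal]
  exact ObjectProperty.ext_of_isTriangulatedClosed₁ _ _ hT
    (IsKInjective.rightOrthogonal (∏ᶜ L)) (IsKInjective.rightOrthogonal (∏ᶜ L))

/-! Products of short exact sequences. -/

section ses

variable {A B : ℕ → CochainComplex C ℤ} (f : ∀ m, A m ⟶ B m)

noncomputable def scP : ShortComplex (CochainComplex C ℤ) :=
  ShortComplex.mk (Limits.Pi.map (fun m => kernel.ι (f m))) (Limits.Pi.map f) (by
    apply Pi.hom_ext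
    intro m
    simp)

lemma scP_mono : Mono (Limits.Pi.map (fun m => kernel.ι (f m))) := by
  refine ⟨fun u v huv => Pi.hom_ext _ _ fun m => ?_⟩
  rw [← cancel_mono (kernel.ι (f m))]
  simpa using huv =≫ Pi.π _ m

lemma scP_lift {T : CochainComplex C ℤ} (t : T ⟶ ∏ᶜ A) (ht : t ≫ Limits.Pi.map f = 0) :
    ∃ u, u ≫ Limits.Pi.map (fun m => kernel.ι (f m)) = t := by
  refine ⟨Pi.lift (fun m => kernel.lift (f m) (t ≫ Pi.π _ m) ?_), ?_⟩
  · simpa using ht =≫ Pi.π _ m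
  · apply Pi.hom_ext
    intro m
    simp

open CochainComplex in
lemma scP_shortExact (hf : ∀ m, degreewiseEpiWithInjectiveKernel (f m)) :
    (scP f).ShortExact where
  mono_f := scP_mono f
  epi_g := by
    apply epi_of_epi_f
    intro j
    choose s hs using fun m => exists_section (hf m) j
    have : piXLift A j (fun m => (Pi.π B m).f j ≫ s m) ≫ (Limits.Pi.map f).f j = 𝟙 _ := by
      apply piX_ext
      intro m
      have h1 : (Limits.Pi.map f).f j ≫ (Pi.π B m).f j = (Pi.π A m).f j ≫ (f m).f j := by
        rw [← comp_f, Limits.Pi.map_π, comp_f]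
      simp [h1, piXLift_π_assoc, hs]
    exact (SplitEpi.mk _ this).epi
  exact := by
    have : Mono (scP f).f := scP_mono f
    apply ShortComplex.exact_of_f_is_kernel
    exact KernelFork.IsLimit.ofι' _ _ (fun {T} t ht =>
      ⟨(scP_lift f t ht).choose, (scP_lift f t ht).choose_spec⟩)

end ses

open CochainComplex in
lemma injective_kernel_X {A B : CochainComplex C ℤ} {f : A ⟶ B}
    (hf : degreewiseEpiWithInjectiveKernel f) (j : ℤ) : Injective ((kernel f).X j) :=
  Injective.of_iso (PreservesKernel.iso (eval C _ j) f).symm (hf j).2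

/-- Long exact sequence: quasi-iso in a degree from exactness of the kernel. -/
lemma quasiIsoAt_of_exactAt (S : ShortComplex (CochainComplex C ℤ)) (hS : S.ShortExact) (q : ℤ)
    (h0 : S.X₁.ExactAt q) (h1 : S.X₁.ExactAt (q + 1)) : IsIso (homologyMap S.g q) := by
  rw [exactAt_iff_isZero_homology] at h0 h1
  have : Mono (homologyMap S.g q) :=
    (hS.homology_exact₂ q).mono_g (h0.eq_of_src _ _)
  have : Epi (homologyMap S.g q) :=
    (hS.homology_exact₃ q (q + 1) (by simp)).epi_f (h1.eq_of_tgt _ _)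
  exact isIso_of_mono_of_epi _

open HomologySequence ComposableArrows in
/-- Five lemma. -/
lemma isIso_homologyMap_τ₁ {S₁ S₂ : ShortComplex (CochainComplex C ℤ)} (φ : S₁ ⟶ S₂)
    (hS₁ : S₁.ShortExact) (hS₂ : S₂.ShortExact) (i j : ℤ) (hij : (ComplexShape.up ℤ).Rel i j)
    (h2i : IsIso (homologyMap φ.τ₂ i)) (h3i : IsIso (homologyMap φ.τ₃ i))
    (h2j : IsIso (homologyMap φ.τ₂ j)) (h3j : IsIso (homologyMap φ.τ₃ j)) :
    IsIso (homologyMap φ.τ₁ j) := by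
  apply Abelian.isIso_of_epi_of_isIso_of_isIso_of_mono
    (composableArrows₅_exact hS₁ i j hij).δ₀ (composableArrows₅_exact hS₂ i j hij).δ₀
    (δ₀Functor.map (mapComposableArrows₅ φ hS₁ hS₂ i j hij))
  · exact inferInstanceAs (Epi (homologyMap φ.τ₂ i))
  · exact h3i
  · exact h2j
  · exact inferInstanceAs (Mono (homologyMap φ.τ₃ j))


/-- An `ℕ`-indexed complex of injectives, exact in positive degrees, is an injective resolution. -/
noncomputable def resOf (R : CochainComplex C ℕ) (hi : ∀ q, Injective (R.X q))
    (hR : ∀ q, R.ExactAt (q + 1)) : InjectiveResolution (kernel (R.d 0 1)) where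
  cocomplex := R
  injective := hi
  ι := (CochainComplex.fromSingle₀Equiv _ _).symm ⟨kernel.ι (R.d 0 1), kernel.condition _⟩
  quasiIso := ⟨fun q => by
    cases q with
    | zero =>
      rw [CochainComplex.quasiIsoAt₀_iff, ShortComplex.quasiIso_iff_of_zeros]
      rotate_left
      · rfl
      · rfl
      · exact R.shape _ _ (by simp)
      · have k1 : ∀ (g : kernel (R.d 0 1) ⟶ R.X 0) (w : g ≫ R.d 0 1 = 0), g = kernel.ι _ →
            (ShortComplex.mk g (R.d 0 1) w).Exact := by
          rintro _ _ rfl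
          exact ShortComplex.exact_kernel _
        have k2 : ∀ (g : kernel (R.d 0 1) ⟶ R.X 0), g = kernel.ι _ → Mono g := by
          rintro _ rfl
          infer_instance
        exact ⟨k1 _ _ (CochainComplex.fromSingle₀Equiv_symm_apply_f_zero _ _),
          k2 _ (CochainComplex.fromSingle₀Equiv_symm_apply_f_zero _ _)⟩
    | succ q =>
      rw [quasiIsoAt_iff_exactAt]
      · exact hR q
      · exact CochainComplex.exactAt_succ_single_obj _ _⟩

instance (a : ℤ) : PreservesLimitsOfShape (Discrete ℕ)
    ((ComplexShape.embeddingUpIntGE a).restrictionFunctor C) :=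
  preservesLimitsOfShape_of_eval _ (fun i =>
    inferInstanceAs (PreservesLimitsOfShape (Discrete ℕ) (eval C (ComplexShape.up ℤ) (a + i))))

lemma exactAt_restriction_iff (F : CochainComplex C ℤ) (a : ℤ) (q : ℕ) :
    (F.restriction (ComplexShape.embeddingUpIntGE a)).ExactAt (q + 1) ↔
      F.ExactAt (a + (q + 1 : ℕ)) := by
  rw [exactAt_iff_isZero_homology, exactAt_iff_isZero_homology]
  exact (F.restrictionHomologyIso (ComplexShape.embeddingUpIntGE a) q (q + 1) (q + 2)
    (by simp) (by simp) (i' := a + q) (j' := a + (q + 1 : ℕ)) (k' := a + (q + 2 : ℕ))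
    rfl rfl rfl (by simp; lia) (by simp; lia)).isZero_iff

/-- Consequence of AB4*-n for products of complexes of injectives exact in large degrees. -/
lemma exactAt_pi {n : ℕ} (hC : AB4StarMinus C n) (F : ℕ → CochainComplex C ℤ)
    (hF : ∀ k j, Injective ((F k).X j)) (a : ℤ) (hex : ∀ k q, a ≤ q → (F k).ExactAt q) (q : ℤ)
    (hq : a + n ≤ q) : (∏ᶜ F).ExactAt q := by
  obtain ⟨r, rfl⟩ : ∃ r : ℕ, q = (a - 1) + (r + 1 : ℕ) := ⟨(q - a).toNat, by lia⟩
  let e := ComplexShape.embeddingUpIntGE (a - 1)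
  rw [← exactAt_restriction_iff]
  have H := hC ℕ (fun k => kernel (((F k).restriction e).d 0 1))
    (fun k => resOf ((F k).restriction e) (fun q => hF _ _)
      (fun q => (exactAt_restriction_iff _ _ _).2 (hex _ _ (by lia)))) (r + 1) (by lia)
  rw [exactAt_iff_isZero_homology]
  refine IsZero.of_iso H ?_
  exact (homologyFunctor C _ (r + 1)).mapIso (PreservesProduct.iso (e.restrictionFunctor C) F)

open CochainComplex in
/-- Families of fibrations which are quasi-isomorphisms in large degrees. -/
lemma isIso_homologyMap_pi {n : ℕ} (hC : AB4StarMinus C n) {A B : ℕ → CochainComplex C ℤ}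
    (f : ∀ m, A m ⟶ B m) (hf : ∀ m, degreewiseEpiWithInjectiveKernel (f m)) (b : ℤ)
    (hb : ∀ m q, b ≤ q → IsIso (homologyMap (f m) q)) (q : ℤ) (hq : b + n + 1 ≤ q) :
    IsIso (homologyMap (Limits.Pi.map f) q) := by
  have hk : ∀ q, b + n + 1 ≤ q → (∏ᶜ fun m => kernel (f m)).ExactAt q := by
    intro q hq
    refine exactAt_pi hC _ (fun k j => injective_kernel_X (hf k) j) (b + 1) ?_ q (by lia)
    intro m q hq
    have hS : (ShortComplex.mk (kernel.ι (f m)) (f m) (kernel.condition _)).ShortExact :=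
      { exact := ShortComplex.exact_kernel _
        mono_f := inferInstanceAs (Mono (kernel.ι (f m)))
        epi_g := by
          have : ∀ j, Epi ((f m).f j) := fun j => (hf m j).1
          exact epi_of_epi_f _ this }
    have i2 := hb m q (by lia)
    refine hS.exactAt_X₁ q (inferInstanceAs (Mono (homologyMap (f m) q))) ?_
    intro i hi
    have i1 := hb m i (by simp at hi; lia)
    exact inferInstanceAs (Epi (homologyMap (f m) i))
  exact quasiIsoAt_of_exactAt (scP f) (scP_shortExact f hf) q (hk _ hq) (hk _ (by lia))


/-- Composite transition maps of a tower. -/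
noncomputable def cT (L : ℕ → CochainComplex C ℤ) (p : ∀ m, L (m + 1) ⟶ L m) : ∀ m, L m ⟶ L 0
  | 0 => 𝟙 _
  | m + 1 => p m ≫ cT L p m

lemma isLim_const (K : CochainComplex C ℤ) :
    IsLim (fun _ => K) (fun _ => 𝟙 K) K (fun _ => 𝟙 K) where
  w m := by simp
  lift t ht := ⟨t 0, fun m => by
    induction m with
    | zero => simp
    | succ m hm => rw [hm, ← ht]; simp⟩
  ext u v h := by simpa using h 0

lemma IsLim.π_cT {L : ℕ → CochainComplex C ℤ} {p : ∀ m, L (m + 1) ⟶ L m}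
    {I : CochainComplex C ℤ} {π : ∀ m, I ⟶ L m} (h : IsLim L p I π) (m : ℕ) :
    π m ≫ cT L p m = π 0 := by
  induction m with
  | zero => simp [cT]
  | succ m hm => rw [cT, ← Category.assoc, h.w, hm]

open CochainComplex in
/-- If the transition maps of a tower of fibrations are quasi-isomorphisms in degrees `≥ b`, then
the limit maps quasi-isomorphically to the bottom in degrees `≥ b + n + 2`. -/
lemma isIso_homologyMap_π {n : ℕ} (hC : AB4StarMinus C n)
    (L : ℕ → CochainComplex C ℤ) (p : ∀ m, L (m + 1) ⟶ L m)
    (I : CochainComplex C ℤ) (π : ∀ m, I ⟶ L m) (h : IsLim L p I π)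
    (hp : ∀ m, degreewiseEpiWithInjectiveKernel (p m)) (b : ℤ)
    (hb : ∀ m q, b ≤ q → IsIso (homologyMap (p m) q)) (q : ℤ) (hq : b + n + 2 ≤ q) :
    IsIso (homologyMap (π 0) q) := by
  have hid : degreewiseEpiWithInjectiveKernel (𝟙 (L 0)) := MorphismProperty.id_mem _ _
  have hc : ∀ m, degreewiseEpiWithInjectiveKernel (cT L p m) := by
    intro m
    induction m with
    | zero => exact hid
    | succ m hm => exact MorphismProperty.comp_mem _ _ _ (hp m) hm
  have hcb : ∀ m q, b ≤ q → IsIso (homologyMap (cT L p m) q) := by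
    intro m q hq
    induction m with
    | zero => rw [cT, homologyMap_id]; infer_instance
    | succ m hm =>
      have := hb m q hq
      rw [cT, homologyMap_comp]; infer_instance
  have hP : ∀ q, b + n + 1 ≤ q → IsIso (homologyMap (Limits.Pi.map (cT L p)) q) :=
    isIso_homologyMap_pi hC (B := fun _ => L 0) (cT L p) hc b hcb
  let φ : scT L p I π h ⟶ scT (fun _ => L 0) (fun _ => 𝟙 _) (L 0) (fun _ => 𝟙 _)
      (isLim_const (L 0)) :=
    { τ₁ := π 0
      τ₂ := Limits.Pi.map (cT L p)
      τ₃ := Limits.Pi.map (cT L p)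
      comm₁₂ := by
        dsimp [scT]
        apply Pi.hom_ext
        intro m
        simp [h.π_cT]
      comm₂₃ := by
        dsimp [scT]
        apply Pi.hom_ext
        intro m
        have := dT_π_assoc L p m (cT L p m)
        simp [cT, this] }
  exact isIso_homologyMap_τ₁ φ (scT_shortExact L p I π h hp)
    (scT_shortExact _ _ _ _ _ (fun _ => hid)) (q - 1) q (by simp)
    (hP _ (by lia)) (hP _ (by lia)) (hP _ (by lia)) (hP _ (by lia))

lemma IsLim.shift {L : ℕ → CochainComplex C ℤ} {p : ∀ m, L (m + 1) ⟶ L m}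
    {I : CochainComplex C ℤ} {π : ∀ m, I ⟶ L m} (h : IsLim L p I π) :
    IsLim (fun m => L (m + 1)) (fun m => p (m + 1)) I (fun m => π (m + 1)) where
  w m := h.w (m + 1)
  lift {T} t ht := by
    let t' : ∀ m, T ⟶ L m := fun m => match m with
      | 0 => t 0 ≫ p 0
      | m + 1 => t m
    obtain ⟨u, hu⟩ := h.lift t' (fun m => by
      cases m with
      | zero => rfl
      | succ m => exact ht m)
    exact ⟨u, fun m => hu (m + 1)⟩
  ext u v huv := h.ext u v (fun m => by
    rw [← h.w, ← Category.assoc, ← Category.assoc, huv m])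

open CochainComplex in
lemma isIso_homologyMap_π_of_le {n : ℕ} (hC : AB4StarMinus C n) (k : ℕ)
    (L : ℕ → CochainComplex C ℤ) (p : ∀ m, L (m + 1) ⟶ L m)
    (I : CochainComplex C ℤ) (π : ∀ m, I ⟶ L m) (h : IsLim L p I π)
    (hp : ∀ m, degreewiseEpiWithInjectiveKernel (p m)) (b : ℤ)
    (hb : ∀ m q, k ≤ m → b ≤ q → IsIso (homologyMap (p m) q)) (q : ℤ) (hq : b + n + 2 ≤ q) :
    IsIso (homologyMap (π k) q) := by
  induction k generalizing L with
  | zero => exact isIso_homologyMap_π hC L p I π h hp b (fun m q => hb m q (by lia)) q hq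
  | succ k hk =>
    exact hk _ _ _ h.shift (fun m => hp (m + 1)) (fun m q hm => hb (m + 1) q (by lia))

section tower

variable [EnoughInjectives C] (N : CochainComplex C ℤ)

/-- A map to a bounded below complex of injectives. -/
structure St where
  I : CochainComplex C ℤ
  g : N ⟶ I
  inj : ∀ j, Injective (I.X j)
  bdd : ∃ b : ℤ, I.IsStrictlyGE b

open CochainComplex in
lemma exists_step (s : St N) (c : ℤ) : ∃ (s' : St N) (p : s'.I ⟶ s.I),
    degreewiseEpiWithInjectiveKernel p ∧ s'.g ≫ p = s.g ∧ ∀ q, c ≤ q → QuasiIsoAt s'.g q := by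
  obtain ⟨b, hb⟩ := s.bdd
  let d : ℤ := min (b - 1) (c - 1)
  have h1 : s.I.IsStrictlyGE (d + 1) := s.I.isStrictlyGE_of_ge (d + 1) b (by lia)
  have h0 : s.I.IsStrictlyGE d := s.I.isStrictlyGE_of_ge d b (by lia)
  let f : N.truncGE (d + 1) ⟶ s.I := truncGEMap s.g (d + 1) ≫ inv (s.I.πTruncGE (d + 1))
  obtain ⟨K', hK', ι, π, _, hι, hπ, fac⟩ :=
    CochainComplex.Plus.modelCategoryQuillen.cm5a f d
  refine ⟨⟨K', N.πTruncGE (d + 1) ≫ ι, ?_, d, hK'⟩, π, hπ, ?_, ?_⟩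
  · have hz : degreewiseEpiWithInjectiveKernel (0 : s.I ⟶ kernel (𝟙 s.I)) := by
      rw [degreewiseEpiWithInjectiveKernel_iff_of_isZero _ (isZero_kernel_of_mono _)]
      exact s.inj
    exact (degreewiseEpiWithInjectiveKernel_iff_of_isZero _ (isZero_kernel_of_mono _)).1
      (MorphismProperty.comp_mem _ _ _ hπ hz)
  · dsimp
    rw [Category.assoc, fac]
    simp only [f]
    rw [← Category.assoc, CochainComplex.πTruncGE_naturality]
    simp
  · intro q hq
    have := N.quasiIsoAt_πTruncGE (d + 1) q (by lia)
    dsimp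
    infer_instance

lemma nonempty_St : Nonempty (St N) := by
  have hz : ∀ j, IsZero ((kernel (𝟙 N)).X j) := fun j =>
    (eval C (ComplexShape.up ℤ) j).map_isZero (isZero_kernel_of_mono (𝟙 N))
  refine ⟨⟨kernel (𝟙 N), 0, fun j => (hz j).injective, 0, ?_⟩⟩
  rw [CochainComplex.isStrictlyGE_iff]
  intro i _
  exact hz i

/-- The tower of injective resolutions of truncations. -/
noncomputable def st : ℕ → St N
  | 0 => (nonempty_St N).some
  | m + 1 => (exists_step N (st m) (-m)).choose

noncomputable def stp (m : ℕ) : (st N (m + 1)).I ⟶ (st N m).I :=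
  (exists_step N (st N m) (-m)).choose_spec.choose

lemma stp_spec (m : ℕ) : CochainComplex.degreewiseEpiWithInjectiveKernel (stp N m) ∧
    (st N (m + 1)).g ≫ stp N m = (st N m).g ∧
      ∀ q, -(m : ℤ) ≤ q → QuasiIsoAt (st N (m + 1)).g q :=
  (exists_step N (st N m) (-m)).choose_spec.choose_spec

lemma exists_isKInjective {n : ℕ} (hC : AB4StarMinus C n) :
    ∃ (I : CochainComplex C ℤ) (f : N ⟶ I), I.IsKInjective ∧ QuasiIso f := by
  have h := isLim_kernel (fun m => (st N m).I) (stp N)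
  obtain ⟨f, hf⟩ := h.lift (fun m => (st N m).g) (fun m => (stp_spec N m).2.1)
  have hK : ∀ m, (st N m).I.IsKInjective := fun m => by
    obtain ⟨b, hb⟩ := (st N m).bdd
    have := (st N m).inj
    exact CochainComplex.isKInjective_of_injective _ b
  refine ⟨_, f, isKInjective_of_isLim _ _ _ _ h (fun m => (stp_spec N m).1), ⟨fun q => ?_⟩⟩
  let k : ℕ := (n + 2 - q).toNat
  have hg : ∀ (m : ℕ) q, k + 1 ≤ m → -(k : ℤ) ≤ q → QuasiIsoAt (st N m).g q := by
    intro m q hm hq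
    obtain ⟨m, rfl⟩ : ∃ m', m = m' + 1 := ⟨m - 1, by lia⟩
    exact (stp_spec N m).2.2 q (by lia)
  have hπ := isIso_homologyMap_π_of_le hC (k + 1) _ _ _ _ h (fun m => (stp_spec N m).1) (-k)
    (fun m q hm hq => by
      rw [← quasiIsoAt_iff_isIso_homologyMap]
      have i1 := hg m q hm hq
      have i2 := hg (m + 1) q (by lia) hq
      rw [← (stp_spec N m).2.1] at i1
      exact quasiIsoAt_of_comp_left (st N (m + 1)).g (stp N m) q) q (by lia)
  rw [← quasiIsoAt_iff_isIso_homologyMap] at hπ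
  have i3 := hg (k + 1) q le_rfl (by lia)
  have i4 := hf (k + 1)
  rw [← i4] at i3
  exact quasiIsoAt_of_comp_right (hφ' := hπ) (hφφ' := i3)

end tower

end KInjTower

theorem enough_K_injectives_of_ab4StarMinus
    {C : Type u} [Category.{v} C] [Abelian C] [HasProducts.{0} C] [EnoughInjectives C]
    (n : ℕ) (hC : AB4StarMinus C n) (N : CochainComplex C ℤ) :
    ∃ (I : CochainComplex C ℤ) (f : N ⟶ I), KInjective I ∧ QuasiIso f := by
  obtain ⟨I, f, hI, hf⟩ := KInjTower.exists_isKInjective N hC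
  exact ⟨I, f, fun A hA g => hI.nonempty_homotopy_zero g hA, hf⟩
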